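/- Let d ≥ 1 be an integer, α ∈ (−1,1), and define b : ℝ^d → ℝ^d by b(x) = |x|^{α−1} x for 0 < |x| ≤ 1, b(x) = x for |x| > 1, and b(0) = 0. Then for every x₀ ∈ ℝ^d with x₀ ≠ 0 there exists exactly one continuous function y : [0,∞) → ℝ^d such that s ↦ b(y(s)) is locally Lebesgue integrable and y(t) = x₀ + ∫₀^t b(y(s)) ds for all t ≥ 0. -/

import Mathlib

open MeasureTheory Set
open scoped ENNReal

noncomputable section

/-- The outward-pointing drift `b(x) = |x|^{α-1} x` for `0 < |x| ≤ 1`,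
`b(x) = x` for `|x| > 1`, and `b(0) = 0` (note `‖x‖ ^ (α-1) = 0` at `x = 0`
for the real power with negative exponent). -/
def bOut (d : ℕ) (α : ℝ) (x : EuclideanSpace ℝ (Fin d)) : EuclideanSpace ℝ (Fin d) :=
  if ‖x‖ ≤ 1 then (‖x‖ ^ (α - 1)) • x else x

/-- `y` is a solution on `[0,∞)` of the ODE `y' = bOut d α (y)`, `y 0 = x₀`,
in the integral sense, with locally integrable right-hand side. -/
def IsSolOut (d : ℕ) (α : ℝ) (x₀ : EuclideanSpace ℝ (Fin d))
    (y : ℝ → EuclideanSpace ℝ (Fin d)) : Prop :=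
  ContinuousOn y (Ici 0) ∧
  (∀ t : ℝ, 0 ≤ t → IntegrableOn (fun s => bOut d α (y s)) (Icc 0 t)) ∧
  (∀ t : ℝ, 0 ≤ t → y t = x₀ + ∫ s in (0 : ℝ)..t, bOut d α (y s))

/-!
Along a solution the norm is strictly increasing as long as it is positive, so a solution that
starts away from the origin never meets the singularity; there the drift is locally Lipschitz and
the classical uniqueness theorem applies. Every solution moves along the ray through `x₀`: in
logarithmic polar coordinates the equation is scalar and autonomous with positive bounded speed,
and is solved by inverting its time map.
-/

open scoped Topology

section LocallyLipschitz

variable {X Y Z : Type*} [PseudoEMetricSpace X] [PseudoEMetricSpace Y] [PseudoEMetricSpace Z]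

theorem locallyLipschitzOn_comp {f : X → Y} {g : Y → Z} {s : Set X} {t : Set Y}
    (hg : LocallyLipschitzOn t g) (hf : LocallyLipschitzOn s f) (hst : MapsTo f s t) :
    LocallyLipschitzOn s (g ∘ f) := by
  intro x hx
  obtain ⟨Kf, u, hu, hfu⟩ := hf hx
  obtain ⟨Kg, w, hw, hgw⟩ := hg (hst hx)
  have hpre : f ⁻¹' w ∈ 𝓝[s] x :=
    (hf.continuousOn x hx).tendsto_nhdsWithin hst hw
  exact ⟨Kg * Kf, u ∩ f ⁻¹' w, Filter.inter_mem hu hpre,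
    hgw.comp (hfu.mono inter_subset_left) fun _ h => h.2⟩

theorem locallyLipschitzOn_prodMk {f : X → Y} {g : X → Z} {s : Set X}
    (hf : LocallyLipschitzOn s f) (hg : LocallyLipschitzOn s g) :
    LocallyLipschitzOn s fun x => (f x, g x) := by
  intro x hx
  obtain ⟨Kf, u, hu, hfu⟩ := hf hx
  obtain ⟨Kg, w, hw, hgw⟩ := hg hx
  exact ⟨max Kf Kg, u ∩ w, Filter.inter_mem hu hw,
    (hfu.mono inter_subset_left).prodMk (hgw.mono inter_subset_right)⟩

end LocallyLipschitz

section RealLine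

theorem surjective_of_le_hasDerivAt {f f' : ℝ → ℝ} {c : ℝ} (hc : 0 < c)
    (hf : ∀ x, HasDerivAt f (f' x) x) (hf' : ∀ x, c ≤ f' x) : Function.Surjective f := by
  have hdiff : Differentiable ℝ f := fun x => (hf x).differentiableAt
  have hgrowth : ∀ ⦃x y⦄, x ≤ y → c * (y - x) ≤ f y - f x :=
    mul_sub_le_image_sub_of_le_deriv hdiff fun x => (hf x).deriv ▸ hf' x
  refine hdiff.continuous.surjective ?_ ?_
  · refine Filter.tendsto_atTop_mono' _ ?_
      (Filter.tendsto_atTop_add_const_right _ (f 0) (Filter.tendsto_id.const_mul_atTop hc))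
    filter_upwards [Filter.eventually_ge_atTop 0] with x hx
    simpa [le_sub_iff_add_le] using hgrowth hx
  · refine Filter.tendsto_atBot_mono' _ ?_
      (Filter.tendsto_atBot_add_const_right _ (f 0) (Filter.tendsto_id.const_mul_atBot hc))
    filter_upwards [Filter.eventually_le_atBot 0] with x hx
    have hle : c * (0 - x) ≤ f 0 - f x := hgrowth hx
    dsimp only [id]
    linarith

-- The solution is the inverse of the time map `s ↦ ∫ x in s₀..s, (v x)⁻¹`.
theorem exists_forall_hasDerivAt_of_pos_of_bddAbove {v : ℝ → ℝ} (hv : Continuous v)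
    (hpos : ∀ s, 0 < v s) (hbdd : BddAbove (range v)) (s₀ : ℝ) :
    ∃ σ : ℝ → ℝ, σ 0 = s₀ ∧ ∀ t, HasDerivAt σ (v (σ t)) t := by
  obtain ⟨C, hC⟩ := hbdd
  have hvC : ∀ s, v s ≤ C := fun s => hC (mem_range_self s)
  let T : ℝ → ℝ := fun s => ∫ x in s₀..s, (v x)⁻¹
  have hT : ∀ s, HasDerivAt T (v s)⁻¹ s := fun s =>
    (hv.inv₀ fun x => (hpos x).ne').integral_hasStrictDerivAt s₀ s |>.hasDerivAt
  have hmono : StrictMono T := strictMono_of_hasDerivAt_pos hT fun s => inv_pos.mpr (hpos s)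
  have hsurj : Function.Surjective T :=
    surjective_of_le_hasDerivAt (inv_pos.mpr ((hpos 0).trans_le (hvC 0))) hT
      fun s => inv_anti₀ (hpos s) (hvC s)
  let e : ℝ ≃o ℝ := hmono.orderIsoOfSurjective T hsurj
  refine ⟨e.symm, e.symm_apply_eq.mpr intervalIntegral.integral_same.symm, fun t => ?_⟩
  simpa only [inv_inv] using (hT (e.symm t)).of_local_left_inverse
    e.symm.continuous.continuousAt (inv_pos.mpr (hpos _)).ne' (.of_forall e.apply_symm_apply)

theorem eventually_lt_of_hasDerivWithinAt_pos {f : ℝ → ℝ} {f' t : ℝ}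
    (hf : HasDerivWithinAt f f' (Ici t) t) (hf' : 0 < f') : ∀ᶠ s in 𝓝[>] t, f t < f s := by
  have hslope : Filter.Tendsto (slope f t) (𝓝[>] t) (𝓝 f') :=
    (hasDerivWithinAt_iff_tendsto_slope' self_notMem_Ioi).mp hf.Ioi_of_Ici
  filter_upwards [hslope.eventually_const_lt hf', self_mem_nhdsWithin] with s hs hts
  exact (slope_pos_iff_of_le (le_of_lt hts)).mp hs

end RealLine

section NormedSpace

variable {E : Type*} [NormedAddCommGroup E] [NormedSpace ℝ E]

-- A functional norming `y t` bounds the norm from below and is differentiable along `y`.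
theorem eventually_norm_lt_of_hasDerivWithinAt_smul {y : ℝ → E} {c t : ℝ} (hc : 0 < c)
    (hyt : y t ≠ 0) (hy : HasDerivWithinAt y (c • y t) (Ici t) t) :
    ∀ᶠ s in 𝓝[>] t, ‖y t‖ < ‖y s‖ := by
  have hnorm : 0 < ‖y t‖ := norm_pos_iff.mpr hyt
  obtain ⟨ℓ, hℓ, hℓt⟩ := exists_dual_vector ℝ (y t) hnorm.ne'
  have hderiv : HasDerivWithinAt (fun s => ℓ (y s)) (c * ‖y t‖) (Ici t) t :=
    (ℓ.hasFDerivAt.comp_hasDerivWithinAt t hy).congr_deriv (by simp [hℓt])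
  filter_upwards [eventually_lt_of_hasDerivWithinAt_pos hderiv (mul_pos hc hnorm)] with s hs
  calc ‖y t‖ = ℓ (y t) := hℓt.symm
    _ < ℓ (y s) := hs
    _ ≤ ‖ℓ (y s)‖ := Real.le_norm_self _
    _ ≤ ‖y s‖ := ℓ.le_of_opNorm_le hℓ.le (y s) |>.trans_eq (one_mul _)

/-- A global forward solution of `y' = b(y)`, `y(0) = x₀`, in the Carathéodory sense: a continuous
function on `[0, ∞)` satisfying the integral equation. Values of `y` at negative times are
irrelevant. -/
structure IsIntegralSolution (b : E → E) (x₀ : E) (y : ℝ → E) : Prop where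
  continuousOn : ContinuousOn y (Ici 0)
  integrableOn : ∀ t : ℝ, 0 ≤ t → IntegrableOn (fun s => b (y s)) (Icc 0 t)
  eq_add_integral : ∀ t : ℝ, 0 ≤ t → y t = x₀ + ∫ s in (0 : ℝ)..t, b (y s)

/-- The vector field `x ↦ φ(|x|) x`, whose integral curves run along rays from the origin. -/
def radialField (φ : ℝ → ℝ) (x : E) : E := φ ‖x‖ • x

namespace IsIntegralSolution

variable {b : E → E} {x₀ : E} {y y₁ y₂ : ℝ → E}

theorem apply_zero (hy : IsIntegralSolution b x₀ y) : y 0 = x₀ := by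
  simpa using hy.eq_add_integral 0 le_rfl

theorem hasDerivWithinAt [CompleteSpace E] (hy : IsIntegralSolution b x₀ y) {t : ℝ} (ht : 0 ≤ t)
    (hb : ContinuousAt b (y t)) : HasDerivWithinAt y (b (y t)) (Ici t) t := by
  have hint : IntervalIntegrable (fun s => b (y s)) volume 0 t :=
    (intervalIntegrable_iff_integrableOn_Icc_of_le ht).mpr (hy.integrableOn t ht)
  have hmeas : StronglyMeasurableAtFilter (fun s => b (y s)) (𝓝[>] t) :=
    ⟨Icc 0 (t + 1), Filter.mem_of_superset (Ioo_mem_nhdsGT (lt_add_one t))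
      fun s hs => ⟨ht.trans hs.1.le, hs.2.le⟩,
      (hy.integrableOn (t + 1) (by linarith)).aestronglyMeasurable⟩
  have hcont : ContinuousWithinAt (fun s => b (y s)) (Ioi t) t :=
    hb.comp_continuousWithinAt
      ((hy.continuousOn t ht).mono fun s hs => ht.trans (le_of_lt hs))
  exact ((intervalIntegral.integral_hasDerivWithinAt_right hint hmeas hcont).const_add x₀).congr
    (fun s hs => hy.eq_add_integral s (ht.trans hs)) (hy.eq_add_integral t ht)

theorem of_hasDerivAt [CompleteSpace E] (hb : ContinuousOn (fun s => b (y s)) (Ici 0))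
    (hy : ∀ t, 0 ≤ t → HasDerivAt y (b (y t)) t) : IsIntegralSolution b (y 0) y where
  continuousOn t ht := (hy t ht).continuousAt.continuousWithinAt
  integrableOn _ _ := (hb.mono Icc_subset_Ici_self).integrableOn_Icc
  eq_add_integral t ht := by
    have hsub : uIcc 0 t ⊆ Ici 0 := uIcc_of_le ht ▸ Icc_subset_Ici_self
    rw [intervalIntegral.integral_eq_sub_of_hasDerivAt (fun s hs => hy s (hsub hs))
      (hb.mono hsub).intervalIntegrable, add_sub_cancel]

theorem eqOn_of_mapsTo [CompleteSpace E] {U : Set E} (hU : IsOpen U)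
    (hb : LocallyLipschitzOn U b) (h₁ : IsIntegralSolution b x₀ y₁)
    (h₂ : IsIntegralSolution b x₀ y₂) (hU₁ : MapsTo y₁ (Ici 0) U) (hU₂ : MapsTo y₂ (Ici 0) U) :
    EqOn y₁ y₂ (Ici 0) := by
  intro t ht
  have hcont : ∀ z, IsIntegralSolution b x₀ z → ContinuousOn z (Icc 0 t) := fun _ hz =>
    hz.continuousOn.mono Icc_subset_Ici_self
  have hderiv : ∀ z, IsIntegralSolution b x₀ z → MapsTo z (Ici 0) U → ∀ s ∈ Ico 0 t,
      HasDerivWithinAt z (b (z s)) (Ici s) s := fun z hz hzU s hs =>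
    hz.hasDerivWithinAt hs.1 (hb.continuousOn.continuousAt (hU.mem_nhds (hzU hs.1)))
  let K : Set E := y₁ '' Icc 0 t ∪ y₂ '' Icc 0 t
  have hK : IsCompact K :=
    (isCompact_Icc.image_of_continuousOn (hcont y₁ h₁)).union
      (isCompact_Icc.image_of_continuousOn (hcont y₂ h₂))
  have hKU : K ⊆ U := union_subset (hU₁.mono_left Icc_subset_Ici_self).image_subset
    (hU₂.mono_left Icc_subset_Ici_self).image_subset
  obtain ⟨L, hL⟩ := (hb.mono hKU).exists_lipschitzOnWith_of_compact hK
  exact ODE_solution_unique_of_mem_Icc_right (v := fun _ => b) (s := fun _ => K) (fun _ _ => hL)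
    (hcont y₁ h₁) (hderiv y₁ h₁ hU₁)
    (fun s hs => .inl (mem_image_of_mem y₁ (Ico_subset_Icc_self hs)))
    (hcont y₂ h₂) (hderiv y₂ h₂ hU₂)
    (fun s hs => .inr (mem_image_of_mem y₂ (Ico_subset_Icc_self hs)))
    (h₁.apply_zero.trans h₂.apply_zero.symm) (right_mem_Icc.mpr ht)

end IsIntegralSolution

section RadialField

variable {φ : ℝ → ℝ} {x₀ : E}

theorem continuousOn_radialField (hφ : ContinuousOn φ (Ioi 0)) :
    ContinuousOn (radialField φ : E → E) {0}ᶜ :=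
  (hφ.comp continuousOn_id.norm fun _ hx => norm_pos_iff.mpr hx).smul continuousOn_id

theorem locallyLipschitzOn_radialField (hφ : LocallyLipschitzOn (Ioi 0) φ) :
    LocallyLipschitzOn {0}ᶜ (radialField φ : E → E) := by
  have hnorm : LocallyLipschitzOn {0}ᶜ fun x : E => φ ‖x‖ :=
    locallyLipschitzOn_comp hφ lipschitzWith_one_norm.locallyLipschitz.locallyLipschitzOn
      fun _ hx => norm_pos_iff.mpr hx
  have hsmul : LocallyLipschitzOn univ fun p : ℝ × E => p.1 • p.2 :=
    (contDiff_smul (𝕜 := ℝ)).locallyLipschitz.locallyLipschitzOn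
  exact locallyLipschitzOn_comp hsmul
    (locallyLipschitzOn_prodMk hnorm LocallyLipschitz.id.locallyLipschitzOn) (mapsTo_univ _ _)

variable [CompleteSpace E]

theorem norm_le_norm_of_isIntegralSolution_radialField (hφ : ContinuousOn φ (Ioi 0))
    (hpos : ∀ r, 0 < r → 0 < φ r) (hx₀ : x₀ ≠ 0) {y : ℝ → E}
    (hy : IsIntegralSolution (radialField φ) x₀ y) {t : ℝ} (ht : 0 ≤ t) : ‖x₀‖ ≤ ‖y t‖ := by
  have hclosed : IsClosed ({s | ‖x₀‖ ≤ ‖y s‖} ∩ Icc 0 t) := by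
    rw [inter_comm]
    exact (hy.continuousOn.mono Icc_subset_Ici_self).norm.preimage_isClosed_of_isClosed
      isClosed_Icc isClosed_Ici
  refine hclosed.Icc_subset_of_forall_mem_nhdsWithin (by simp [hy.apply_zero]) ?_
    (right_mem_Icc.mpr ht)
  rintro s ⟨hs : ‖x₀‖ ≤ ‖y s‖, hst⟩
  have hnorm : 0 < ‖y s‖ := (norm_pos_iff.mpr hx₀).trans_le hs
  have hys : y s ≠ 0 := norm_pos_iff.mp hnorm
  have hderiv : HasDerivWithinAt y (φ ‖y s‖ • y s) (Ici s) s := hy.hasDerivWithinAt hst.1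
    ((continuousOn_radialField hφ).continuousAt (isOpen_compl_singleton.mem_nhds hys))
  filter_upwards [eventually_norm_lt_of_hasDerivWithinAt_smul (hpos _ hnorm) hys hderiv]
    with z hz
  exact hs.trans hz.le

theorem eqOn_of_isIntegralSolution_radialField (hφ : LocallyLipschitzOn (Ioi 0) φ)
    (hpos : ∀ r, 0 < r → 0 < φ r) (hx₀ : x₀ ≠ 0) {y₁ y₂ : ℝ → E}
    (h₁ : IsIntegralSolution (radialField φ) x₀ y₁)
    (h₂ : IsIntegralSolution (radialField φ) x₀ y₂) : EqOn y₁ y₂ (Ici 0) := by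
  have hne : ∀ y, IsIntegralSolution (radialField φ) x₀ y → MapsTo y (Ici 0) {0}ᶜ :=
    fun y hy t ht => norm_pos_iff.mp <| (norm_pos_iff.mpr hx₀).trans_le <|
      norm_le_norm_of_isIntegralSolution_radialField hφ.continuousOn hpos hx₀ hy ht
  exact h₁.eqOn_of_mapsTo isOpen_compl_singleton (locallyLipschitzOn_radialField hφ) h₂
    (hne y₁ h₁) (hne y₂ h₂)

theorem exists_isIntegralSolution_radialField (hφ : ContinuousOn φ (Ioi 0))
    (hpos : ∀ r, 0 < r → 0 < φ r) (hx₀ : x₀ ≠ 0) (hbdd : BddAbove (φ '' Ici ‖x₀‖)) :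
    ∃ y, IsIntegralSolution (radialField φ) x₀ y := by
  have hnorm : 0 < ‖x₀‖ := norm_pos_iff.mpr hx₀
  -- For `y = exp σ • x₀` the equation reads `σ' = φ (‖x₀‖ exp σ)`. Only `σ ≥ 0` is visited, and
  -- truncating there keeps the right-hand side bounded.
  let v : ℝ → ℝ := fun s => φ (‖x₀‖ * Real.exp (max s 0))
  have hv : Continuous v := hφ.comp_continuous (by fun_prop) fun s => by
    rw [mem_Ioi]
    positivity
  have hvpos : ∀ s, 0 < v s := fun s => hpos _ (by positivity)
  have hvbdd : BddAbove (range v) := hbdd.mono <| range_subset_iff.mpr fun s =>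
    mem_image_of_mem φ (le_mul_of_one_le_right hnorm.le (Real.one_le_exp (le_max_right s 0)))
  obtain ⟨σ, hσ₀, hσ⟩ := exists_forall_hasDerivAt_of_pos_of_bddAbove hv hvpos hvbdd 0
  have hσ_nonneg : ∀ t, 0 ≤ t → 0 ≤ σ t := fun t ht =>
    hσ₀ ▸ (strictMono_of_hasDerivAt_pos hσ fun s => hvpos (σ s)).monotone ht
  let y : ℝ → E := fun t => Real.exp (σ t) • x₀
  have hy : ∀ t, 0 ≤ t → HasDerivAt y (radialField φ (y t)) t := fun t ht => by
    have hfield : radialField φ (y t) = (Real.exp (σ t) * v (σ t)) • x₀ := by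
      simp only [radialField, y, v, norm_smul, Real.norm_eq_abs, Real.abs_exp,
        max_eq_left (hσ_nonneg t ht), smul_smul, mul_comm]
    exact hfield ▸ (hσ t).exp.smul_const x₀
  have hcont : ContinuousOn (fun t => radialField φ (y t)) (Ici 0) :=
    (continuousOn_radialField hφ).comp (fun t ht => (hy t ht).continuousAt.continuousWithinAt)
      fun t _ => smul_ne_zero (Real.exp_ne_zero _) hx₀
  have hy₀ : y 0 = x₀ := by simp only [y, hσ₀, Real.exp_zero, one_smul]
  exact ⟨y, hy₀ ▸ .of_hasDerivAt hcont hy⟩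

theorem outward_drift_uniqueness_away_from_origin_general (hφ : LocallyLipschitzOn (Ioi 0) φ)
    (hpos : ∀ r, 0 < r → 0 < φ r) (hx₀ : x₀ ≠ 0) (hbdd : BddAbove (φ '' Ici ‖x₀‖)) :
    (∃ y, IsIntegralSolution (radialField φ) x₀ y) ∧
    (∀ y₁ y₂, IsIntegralSolution (radialField φ) x₀ y₁ →
      IsIntegralSolution (radialField φ) x₀ y₂ → EqOn y₁ y₂ (Ici 0)) :=
  ⟨exists_isIntegralSolution_radialField hφ.continuousOn hpos hx₀ hbdd,
    fun _ _ => eqOn_of_isIntegralSolution_radialField hφ hpos hx₀⟩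

end RadialField

end NormedSpace

section TruncatedPower

theorem locallyLipschitzOn_min_one_rpow (p : ℝ) :
    LocallyLipschitzOn (Ioi 0) fun r : ℝ => min r 1 ^ p := by
  have hpow : LocallyLipschitzOn (Ioi 0) fun r : ℝ => r ^ p :=
    ContDiffOn.locallyLipschitzOn (convex_Ioi 0) fun r hr =>
      (Real.contDiffAt_rpow_const_of_ne (ne_of_gt hr)).contDiffWithinAt
  have hmin : LocallyLipschitzOn (Ioi 0) fun r : ℝ => min r 1 :=
    (LipschitzWith.id.min_const 1).locallyLipschitz.locallyLipschitzOn
  exact locallyLipschitzOn_comp hpow hmin fun _ hr => mem_Ioi.mpr (lt_min hr one_pos)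

theorem bddAbove_image_min_one_rpow (p : ℝ) {r : ℝ} (hr : 0 < r) :
    BddAbove ((fun s : ℝ => min s 1 ^ p) '' Ici r) := by
  have hpow : ContinuousOn (fun s : ℝ => s ^ p) (Icc (min r 1) 1) := fun s hs =>
    (Real.continuousAt_rpow_const s p
      (.inl ((lt_min hr one_pos).trans_le hs.1).ne')).continuousWithinAt
  refine (isCompact_Icc.bddAbove_image hpow).mono ?_
  rintro _ ⟨s, hs, rfl⟩
  exact ⟨min s 1, ⟨min_le_min_right 1 hs, min_le_right s 1⟩, rfl⟩

variable {d : ℕ} {α : ℝ}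

theorem bOut_eq_radialField : bOut d α = radialField fun r => min r 1 ^ (α - 1) := by
  funext x
  rw [bOut, radialField]
  split_ifs with h
  · rw [min_eq_left h]
  · rw [min_eq_right (not_le.mp h).le, Real.one_rpow, one_smul]

theorem isSolOut_iff {x₀ : EuclideanSpace ℝ (Fin d)} {y : ℝ → EuclideanSpace ℝ (Fin d)} :
    IsSolOut d α x₀ y ↔ IsIntegralSolution (radialField fun r => min r 1 ^ (α - 1)) x₀ y := by
  rw [← bOut_eq_radialField]
  exact ⟨fun ⟨hc, hi, he⟩ => ⟨hc, hi, he⟩, fun ⟨hc, hi, he⟩ => ⟨hc, hi, he⟩⟩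

end TruncatedPower

theorem outward_drift_uniqueness_away_from_origin (d : ℕ) (hd : 1 ≤ d)
    (α : ℝ) (hα : α ∈ Ioo (-1 : ℝ) 1)
    (x₀ : EuclideanSpace ℝ (Fin d)) (hx₀ : x₀ ≠ 0) :
    (∃ y, IsSolOut d α x₀ y) ∧
    (∀ y₁ y₂, IsSolOut d α x₀ y₁ → IsSolOut d α x₀ y₂ → EqOn y₁ y₂ (Ici 0)) := by
  simpa only [isSolOut_iff] using outward_drift_uniqueness_away_from_origin_general
    (locallyLipschitzOn_min_one_rpow (α - 1)) (fun r hr => by positivity) hx₀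
    (bddAbove_image_min_one_rpow (α - 1) (norm_pos_iff.mpr hx₀))

end
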